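/- (Zlotnik's inequality.) Let T > 0 and let y, b ∈ W^{1,1}(0,T) satisfy y'(t) ≤ g(y(t)) + b'(t) for a.e. t ∈ [0,T] and y(0) = y⁰, where g ∈ C(ℝ) with g(ζ) → −∞ as ζ → +∞. Suppose there are constants N₀ ≥ 0 and N₁ ≥ 0 such that b(t₂) − b(t₁) ≤ N₀ + N₁(t₂ − t₁) for all 0 ≤ t₁ < t₂ ≤ T, and let ζ̄ be a constant such that g(ζ) ≤ −N₁ for all ζ ≥ ζ̄. Then y(t) ≤ max{y⁰, ζ̄} + N₀ < ∞ for all t ∈ [0,T]. -/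

import Mathlib

open MeasureTheory Set Filter

/-!
Set `β t = b t - N₁ * t`. Wherever `y` exceeds `max (y 0) ζbar`, the differential inequality
gives `y' ≤ β'`. So if `y t` exceeds this level, let `s` be the last time before `t` at which it
does not: over `[s, t]` the increment of `y` is at most that of `β`, which is at most `N₀`.
-/

section Excursion

variable {α β : Type*} [LinearOrder α] [TopologicalSpace α] [OrderClosedTopology α]
  [CompactIccSpace α] [LinearOrder β] [TopologicalSpace β] [ClosedIicTopology β]
  {f : α → β} {a b : α} {M : β}

theorem exists_le_and_forall_Ioc_lt (hf : ContinuousOn f (Icc a b)) (hab : a ≤ b) (ha : f a ≤ M)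
    (hb : M < f b) : ∃ s ∈ Ico a b, f s ≤ M ∧ ∀ x ∈ Ioc s b, M < f x := by
  have hcompact : IsCompact (Icc a b ∩ f ⁻¹' Iic M) :=
    isCompact_Icc.of_isClosed_subset
      (hf.preimage_isClosed_of_isClosed isClosed_Icc isClosed_Iic) inter_subset_left
  obtain ⟨s, ⟨hs, hfs⟩, hgreatest⟩ :=
    hcompact.exists_isGreatest ⟨a, left_mem_Icc.2 hab, ha⟩
  have hsb : s ≠ b := fun h => hb.not_ge (h ▸ hfs)
  refine ⟨s, ⟨hs.1, hs.2.lt_of_ne hsb⟩, hfs, fun x hx => ?_⟩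
  by_contra! hfx
  exact (hgreatest ⟨⟨hs.1.trans hx.1.le, hx.2⟩, hfx⟩).not_gt hx.1

theorem le_max_add_of_forall_excursion_sub_le [AddCommGroup β] [IsOrderedAddMonoid β] {C : β}
    (hf : ContinuousOn f (Icc a b)) (hC : 0 ≤ C)
    (hsub : ∀ s t, a ≤ s → s < t → t ≤ b → (∀ x ∈ Ioc s t, M < f x) → f t - f s ≤ C) :
    ∀ t ∈ Icc a b, f t ≤ max (f a) M + C := by
  intro t ht
  rcases le_or_gt (f t) (max (f a) M) with hle | hlt
  · exact le_add_of_le_of_nonneg hle hC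
  obtain ⟨s, hs, hfs, habove⟩ := exists_le_and_forall_Ioc_lt
    (hf.mono (Icc_subset_Icc_right ht.2)) ht.1 (le_max_left _ _) hlt
  have hincr : f t - f s ≤ C :=
    hsub s t hs.1 hs.2 ht.2 fun x hx => (le_max_right _ _).trans_lt (habove x hx)
  calc
    f t ≤ C + f s := sub_le_iff_le_add.1 hincr
    _ ≤ C + max (f a) M := by gcongr
    _ = max (f a) M + C := add_comm _ _

end Excursion

/-- The function `f` belongs to `W^{1,1}` of the interval between `a` and `b`, with weak
derivative `f'`: it is the primitive of the integrable function `f'`. Nothing is required of `f`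
outside the interval. -/
structure IsPrimitiveOn {E : Type*} [NormedAddCommGroup E] [NormedSpace ℝ E] (f f' : ℝ → E)
    (a b : ℝ) : Prop where
  intervalIntegrable : IntervalIntegrable f' volume a b
  eq_add_integral : ∀ t ∈ uIcc a b, f t = f a + ∫ x in a..t, f' x

namespace IsPrimitiveOn

section NormedSpace

variable {E : Type*} [NormedAddCommGroup E] [NormedSpace ℝ E] {f f' h h' : ℝ → E} {a b s t : ℝ}

theorem intervalIntegrable_of_mem (hf : IsPrimitiveOn f f' a b) (hs : s ∈ uIcc a b)
    (ht : t ∈ uIcc a b) : IntervalIntegrable f' volume s t :=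
  hf.intervalIntegrable.mono_set (uIcc_subset_uIcc hs ht)

theorem continuousOn (hf : IsPrimitiveOn f f' a b) : ContinuousOn f (uIcc a b) :=
  (continuousOn_const.add (intervalIntegral.continuousOn_primitive_interval'
    hf.intervalIntegrable left_mem_uIcc)).congr hf.eq_add_integral

theorem sub_eq_integral (hf : IsPrimitiveOn f f' a b) (hs : s ∈ uIcc a b) (ht : t ∈ uIcc a b) :
    f t - f s = ∫ x in s..t, f' x := by
  rw [hf.eq_add_integral t ht, hf.eq_add_integral s hs, add_sub_add_left_eq_sub,
    intervalIntegral.integral_interval_sub_left (hf.intervalIntegrable_of_mem left_mem_uIcc ht)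
      (hf.intervalIntegrable_of_mem left_mem_uIcc hs)]

theorem sub (hf : IsPrimitiveOn f f' a b) (hh : IsPrimitiveOn h h' a b) :
    IsPrimitiveOn (fun t => f t - h t) (fun t => f' t - h' t) a b where
  intervalIntegrable := hf.intervalIntegrable.sub hh.intervalIntegrable
  eq_add_integral t ht := by
    rw [intervalIntegral.integral_sub (hf.intervalIntegrable_of_mem left_mem_uIcc ht)
      (hh.intervalIntegrable_of_mem left_mem_uIcc ht), ← hf.sub_eq_integral left_mem_uIcc ht,
      ← hh.sub_eq_integral left_mem_uIcc ht]
    abel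

theorem smul_const [CompleteSpace E] (c : E) (a b : ℝ) :
    IsPrimitiveOn (fun t => t • c) (fun _ => c) a b where
  intervalIntegrable := intervalIntegrable_const
  eq_add_integral t _ := by
    rw [intervalIntegral.integral_const, ← add_smul, add_sub_cancel]

end NormedSpace

variable {y y' β β' : ℝ → ℝ} {a b s t M C : ℝ}

theorem sub_le_sub_of_ae_le (hy : IsPrimitiveOn y y' a b) (hβ : IsPrimitiveOn β β' a b)
    (hs : s ∈ uIcc a b) (ht : t ∈ uIcc a b) (hst : s ≤ t)
    (hle : y' ≤ᵐ[volume.restrict (Ioc s t)] β') : y t - y s ≤ β t - β s := by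
  rw [hy.sub_eq_integral hs ht, hβ.sub_eq_integral hs ht, intervalIntegral.integral_of_le hst,
    intervalIntegral.integral_of_le hst]
  exact integral_mono_ae (hy.intervalIntegrable_of_mem hs ht).1
    (hβ.intervalIntegrable_of_mem hs ht).1 hle

theorem le_max_add_of_ae_le (hy : IsPrimitiveOn y y' a b) (hβ : IsPrimitiveOn β β' a b)
    (hC : 0 ≤ C) (hle : ∀ᵐ x ∂volume.restrict (Icc a b), M < y x → y' x ≤ β' x)
    (hβC : ∀ s t, a ≤ s → s < t → t ≤ b → β t - β s ≤ C) :
    ∀ t ∈ Icc a b, y t ≤ max (y a) M + C := by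
  refine le_max_add_of_forall_excursion_sub_le (hy.continuousOn.mono Icc_subset_uIcc) hC ?_
  intro s t has hst htb habove
  have hs : s ∈ uIcc a b := Icc_subset_uIcc ⟨has, hst.le.trans htb⟩
  have ht : t ∈ uIcc a b := Icc_subset_uIcc ⟨has.trans hst.le, htb⟩
  have hderiv : y' ≤ᵐ[volume.restrict (Ioc s t)] β' := by
    filter_upwards [ae_restrict_of_ae_restrict_of_subset
      (Ioc_subset_Icc_self.trans (Icc_subset_Icc has htb)) hle,
      ae_restrict_mem measurableSet_Ioc] with x hx hmem using hx (habove x hmem)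
  exact (hy.sub_le_sub_of_ae_le hβ hs ht hst.le hderiv).trans (hβC s t has hst htb)

end IsPrimitiveOn

theorem zlotnik_inequality_general {t₀ T N₀ N₁ ζbar : ℝ} {y b y' b' g : ℝ → ℝ}
    (hy : IsPrimitiveOn y y' t₀ T) (hb : IsPrimitiveOn b b' t₀ T)
    (hineq : ∀ᵐ t ∂volume.restrict (Icc t₀ T), y' t ≤ g (y t) + b' t) (hN₀ : 0 ≤ N₀)
    (hbound : ∀ t₁ t₂, t₀ ≤ t₁ → t₁ < t₂ → t₂ ≤ T → b t₂ - b t₁ ≤ N₀ + N₁ * (t₂ - t₁))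
    (hζ : ∀ ζ > ζbar, g ζ ≤ -N₁) :
    ∀ t ∈ Icc t₀ T, y t ≤ max (y t₀) ζbar + N₀ := by
  have hβ : IsPrimitiveOn (fun t => b t - t * N₁) (fun t => b' t - N₁) t₀ T :=
    hb.sub (.smul_const N₁ t₀ T)
  refine hy.le_max_add_of_ae_le hβ hN₀ ?_ ?_
  · filter_upwards [hineq] with t ht hlt
    linarith [hζ (y t) hlt]
  · intro t₁ t₂ h₁ h₁₂ h₂
    linarith [hbound t₁ t₂ h₁ h₁₂ h₂]

/-- **Zlotnik's inequality** (Lemma 2.2): if `y, b ∈ W^{1,1}(0,T)` satisfy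
`y' ≤ g(y) + b'` a.e. on `[0,T]`, `g` is continuous with `g(ζ) → −∞` as
`ζ → +∞`, `b(t₂) − b(t₁) ≤ N₀ + N₁(t₂ − t₁)` for all `0 ≤ t₁ < t₂ ≤ T`, and
`g(ζ) ≤ −N₁` for all `ζ ≥ ζ̄`, then `y(t) ≤ max{y(0), ζ̄} + N₀` on `[0,T]`. -/
theorem zlotnik_inequality
    (T y0 N₀ N₁ ζbar : ℝ) (hT : 0 < T)
    (y b y' b' g : ℝ → ℝ)
    (hg : Continuous g)
    (hginf : Filter.Tendsto g Filter.atTop Filter.atBot)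
    (hy'int : IntervalIntegrable y' volume 0 T)
    (hb'int : IntervalIntegrable b' volume 0 T)
    (hyftc : ∀ t ∈ Set.Icc (0:ℝ) T, y t = y 0 + ∫ s in (0:ℝ)..t, y' s)
    (hbftc : ∀ t ∈ Set.Icc (0:ℝ) T, b t = b 0 + ∫ s in (0:ℝ)..t, b' s)
    (hy0 : y 0 = y0)
    (hineq : ∀ᵐ t ∂(volume.restrict (Set.Icc (0:ℝ) T)), y' t ≤ g (y t) + b' t)
    (hN₀ : 0 ≤ N₀) (hN₁ : 0 ≤ N₁)
    (hb : ∀ t₁ t₂ : ℝ, 0 ≤ t₁ → t₁ < t₂ → t₂ ≤ T → b t₂ - b t₁ ≤ N₀ + N₁ * (t₂ - t₁))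
    (hζ : ∀ ζ ≥ ζbar, g ζ ≤ -N₁) :
    ∀ t ∈ Set.Icc (0:ℝ) T, y t ≤ max y0 ζbar + N₀ := by
  subst hy0
  have hy : IsPrimitiveOn y y' 0 T := ⟨hy'int, by rwa [uIcc_of_le hT.le]⟩
  have hb_prim : IsPrimitiveOn b b' 0 T := ⟨hb'int, by rwa [uIcc_of_le hT.le]⟩
  exact zlotnik_inequality_general hy hb_prim hineq hN₀ hb fun ζ h => hζ ζ h.le
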